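/- Let X be a complemented subspace of X_p which contains a subspace Y isomorphic to X_p such that Y is complemented in X. Then there exist positive constants c and δ such that for every ε > 0 there is ε' with 0 < ε' < ε such that for every N ∈ ℕ there exist x ∈ X with ‖x‖ = 1 and a finite set E ⊆ {N, N+1, …} satisfying (a) ‖x_{|[1,N]}‖ < N^{-1}, (b) |x_{|E}|_2 ≥ δ·|x|_2, and (c) ε ≥ c·|x_{|E}|_2 ≥ ω(E)^{(p-2)/(2p)} ≥ ε'. -/

import Mathlib

open scoped ENNReal

noncomputable section

/-- The sequence space `ℓ_p` (of real sequences), for a real exponent `p`. -/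
abbrev SeqP (p : ℝ) := lp (fun _ : ℕ => ℝ) (ENNReal.ofReal p)

/-- The sequence space `ℓ_2` (of real sequences). -/
abbrev Seq2 := lp (fun _ : ℕ => ℝ) 2

/-- The space `X_{p,w}`, realized as the submodule of `ℓ_p ⊕_∞ ℓ_2` consisting of the
pairs `(x, y)` with `y n = w n * x n`.  Since the norm on the product is the maximum of
the two norms, this is exactly the completion of the finitely supported sequences under
`‖a‖ = max {|a|_p, |a|_{2,w}}`, the element with coordinates `a` being identified with
the pair `(a, w·a)`. -/
def XpwMod (p : ℝ) (w : ℕ → ℝ) : Submodule ℝ (SeqP p × Seq2) where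
  carrier := {z | ∀ n, (z.2 : ℕ → ℝ) n = w n * (z.1 : ℕ → ℝ) n}
  add_mem' := by
    intro a b ha hb n
    simp only [Prod.fst_add, Prod.snd_add, lp.coeFn_add, Pi.add_apply, ha n, hb n]
    ring
  zero_mem' := by
    intro n
    simp
  smul_mem' := by
    intro c a ha n
    simp only [Prod.smul_fst, Prod.smul_snd, lp.coeFn_smul, Pi.smul_apply, ha n,
      smul_eq_mul]
    ring

/-- The space `X_{p,w}` with its natural norm `‖a‖ = max {|a|_p, |a|_{2,w}}`. -/
def Xpw (p : ℝ) (w : ℕ → ℝ) : Type := ↥(XpwMod p w)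

variable {p : ℝ} {w : ℕ → ℝ}

instance [Fact (1 ≤ ENNReal.ofReal p)] : NormedAddCommGroup (Xpw p w) :=
  inferInstanceAs (NormedAddCommGroup ↥(XpwMod p w))

instance [Fact (1 ≤ ENNReal.ofReal p)] : NormedSpace ℝ (Xpw p w) :=
  inferInstanceAs (NormedSpace ℝ ↥(XpwMod p w))

/-- The pair of coordinates (in `ℓ_p` and in weighted `ℓ_2`) of an element of `X_{p,w}`. -/
def Xpw.pair (x : Xpw p w) : SeqP p × Seq2 := (show ↥(XpwMod p w) from x).val

/-- The underlying sequence of coordinates of an element of `X_{p,w}`. -/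
def seq (x : Xpw p w) : ℕ → ℝ := (Xpw.pair x).1

/-- `|x|_p` for `x ∈ X_{p,w}`. -/
def nrmP (x : Xpw p w) : ℝ := ‖(Xpw.pair x).1‖

/-- `|x|_2 = |x|_{2,w}` for `x ∈ X_{p,w}`. -/
def nrm2 (x : Xpw p w) : ℝ := ‖(Xpw.pair x).2‖

/-- The ratio `r(x) = |x|_2 / |x|_p`. -/
def ratio (x : Xpw p w) : ℝ := nrm2 x / nrmP x

/-- `ω(E) = ∑_{n ∈ E} w_n^{2p/(p-2)}`. -/
def omegaE (p : ℝ) (w : ℕ → ℝ) (E : Set ℕ) : ℝ :=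
  ∑' n : E, w (n : ℕ) ^ (2 * p / (p - 2))

/-- The pairing `⟨x, y⟩ = ∑_n x_n y_n w_n²`. -/
def pairW (w : ℕ → ℝ) (x y : Xpw p w) : ℝ :=
  ∑' n, seq x n * seq y n * w n ^ 2

/-- `w` is a weight sequence suitable for Rosenthal's space `X_p`: it is positive and for
every `ε > 0`, `∑_{w_n < ε} w_n^{2p/(p-2)} = ∞`. -/
def IsXpWeight (p : ℝ) (w : ℕ → ℝ) : Prop :=
  (∀ n, 0 < w n) ∧
    ∀ ε : ℝ, 0 < ε →
      (∑' n : {n : ℕ | w n < ε}, ENNReal.ofReal (w (n : ℕ) ^ (2 * p / (p - 2)))) = ⊤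

theorem memℓp_indicator {q : ℝ≥0∞} (E : Set ℕ) {f : ℕ → ℝ} (hf : Memℓp f q) :
    Memℓp (E.indicator f) q := by
  rcases ENNReal.trichotomy q with hq | hq | hq
  · subst hq
    refine memℓp_zero ((memℓp_zero_iff.mp hf).subset ?_)
    intro i hi
    simp only [Set.mem_setOf_eq] at hi ⊢
    intro h
    exact hi (by simp [Set.indicator_apply, h])
  · subst hq
    obtain ⟨C, hC⟩ := (memℓp_infty_iff.mp hf)
    refine memℓp_infty ⟨C, ?_⟩
    rintro x ⟨i, rfl⟩
    exact le_trans (norm_indicator_le_norm_self f i) (hC ⟨i, rfl⟩)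
  · refine memℓp_gen (Summable.of_nonneg_of_le (fun i => ?_) (fun i => ?_)
      (hf.summable hq))
    · positivity
    · exact Real.rpow_le_rpow (norm_nonneg _) (norm_indicator_le_norm_self f i) hq.le

/-- The restriction `x ↦ x_{|E}` of elements of `X_{p,w}` to a set `E` of coordinates. -/
def restrict (E : Set ℕ) (x : Xpw p w) : Xpw p w :=
  show ↥(XpwMod p w) from
  ⟨(⟨E.indicator ((Xpw.pair x).1 : ℕ → ℝ), memℓp_indicator E (lp.memℓp (Xpw.pair x).1)⟩,
    ⟨E.indicator ((Xpw.pair x).2 : ℕ → ℝ), memℓp_indicator E (lp.memℓp (Xpw.pair x).2)⟩), by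
    intro n
    change E.indicator ((Xpw.pair x).2 : ℕ → ℝ) n = w n * E.indicator ((Xpw.pair x).1 : ℕ → ℝ) n
    by_cases hn : n ∈ E
    · have h : ((Xpw.pair x).2 : ℕ → ℝ) n = w n * ((Xpw.pair x).1 : ℕ → ℝ) n :=
        (show ↥(XpwMod p w) from x).2 n
      simpa [Set.indicator_of_mem hn] using h
    · simp [Set.indicator_of_notMem hn]⟩


/-! ## Helpers -/

set_option linter.unusedSectionVars false
set_option linter.unusedVariables false

section Basic

theorem sign_choice {ι : Type*} [DecidableEq ι] (B : ι → ι → ℝ) (s : Finset ι) :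
    ∃ σ : ι → ℝ, (∀ i, σ i = 1 ∨ σ i = -1) ∧
      ∑ i ∈ s, B i i ≤ ∑ i ∈ s, ∑ j ∈ s, σ i * σ j * B i j := by
  induction s using Finset.induction_on with
  | empty => exact ⟨fun _ => 1, fun _ => Or.inl rfl, by simp⟩
  | insert a s ha ih =>
    obtain ⟨σ, hσ, h⟩ := ih
    set c := ∑ j ∈ s, (σ j * B a j + σ j * B j a) with hc
    obtain ⟨t, ht, htc⟩ : ∃ t : ℝ, (t = 1 ∨ t = -1) ∧ 0 ≤ t * c := by
      rcases le_total 0 c with h0 | h0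
      · exact ⟨1, Or.inl rfl, by simpa using h0⟩
      · exact ⟨-1, Or.inr rfl, by simpa using h0⟩
    refine ⟨Function.update σ a t, ?_, ?_⟩
    · intro i
      by_cases hi : i = a
      · subst hi; simpa using ht
      · simpa [hi] using hσ i
    · have hup : ∀ j ∈ s, Function.update σ a t j = σ j := by
        intro j hj
        have : j ≠ a := by rintro rfl; exact ha hj
        simp [this]
      rw [Finset.sum_insert ha, Finset.sum_insert ha, Finset.sum_insert ha]
      have e1 : ∑ j ∈ s, Function.update σ a t a * Function.update σ a t j * B a j
          = t * ∑ j ∈ s, σ j * B a j := by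
        rw [Finset.mul_sum]
        refine Finset.sum_congr rfl fun j hj => ?_
        rw [hup j hj]; simp; ring
      have e2 : ∑ i ∈ s, ∑ j ∈ insert a s,
          Function.update σ a t i * Function.update σ a t j * B i j
          = t * ∑ j ∈ s, σ j * B j a + ∑ i ∈ s, ∑ j ∈ s, σ i * σ j * B i j := by
        rw [Finset.mul_sum, ← Finset.sum_add_distrib]
        refine Finset.sum_congr rfl fun i hi => ?_
        rw [Finset.sum_insert ha, hup i hi]
        congr 1
        · simp; ring
        · refine Finset.sum_congr rfl fun j hj => ?_
          rw [hup j hj]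
      have e3 : t * ∑ j ∈ s, σ j * B a j + t * ∑ j ∈ s, σ j * B j a = t * c := by
        rw [hc, Finset.sum_add_distrib]; ring
      have e4 : Function.update σ a t a * Function.update σ a t a * B a a = B a a := by
        rcases ht with rfl | rfl <;> simp
      rw [e1, e2, e4]
      linarith

variable [Fact (1 ≤ ENNReal.ofReal p)]

theorem norm_eq_max (x : Xpw p w) : ‖x‖ = max (nrmP x) (nrm2 x) := rfl

theorem nrmP_nonneg (x : Xpw p w) : 0 ≤ nrmP x := norm_nonneg _
theorem nrm2_nonneg (x : Xpw p w) : 0 ≤ nrm2 x := norm_nonneg _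
theorem nrmP_le (x : Xpw p w) : nrmP x ≤ ‖x‖ := le_max_left _ _
theorem nrm2_le (x : Xpw p w) : nrm2 x ≤ ‖x‖ := le_max_right _ _

theorem seq_add (x y : Xpw p w) (n : ℕ) : seq (x + y) n = seq x n + seq y n := rfl
theorem seq_smul (c : ℝ) (x : Xpw p w) (n : ℕ) : seq (c • x) n = c * seq x n := rfl
theorem seq_zero (n : ℕ) : seq (0 : Xpw p w) n = 0 := rfl
theorem pair_snd (x : Xpw p w) (n : ℕ) : ((Xpw.pair x).2 : ℕ → ℝ) n = w n * seq x n :=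
  (show ↥(XpwMod p w) from x).2 n

theorem seq_ext {x y : Xpw p w} (h : ∀ n, seq x n = seq y n) : x = y := by
  apply Subtype.ext
  apply Prod.ext
  · apply lp.ext
    funext n
    exact h n
  · apply lp.ext
    funext n
    have h1 := pair_snd x n
    have h2 := pair_snd y n
    rw [← h n] at h2
    exact h1.trans h2.symm

/-- the `n`-th coordinate vector -/
def bas (n : ℕ) : Xpw p w :=
  show ↥(XpwMod p w) from
  ⟨(lp.single (ENNReal.ofReal p) n (1 : ℝ), lp.single 2 n (w n)), by
    intro k
    change (Pi.single n (w n) : ℕ → ℝ) k = w k * (Pi.single n (1:ℝ) : ℕ → ℝ) k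
    by_cases hk : k = n
    · subst hk; simp
    · simp [hk]⟩

theorem seq_bas (n k : ℕ) : seq (bas n : Xpw p w) k = if k = n then 1 else 0 := by
  change (Pi.single n (1:ℝ) : ℕ → ℝ) k = _
  simp [Pi.single_apply]

/-- linear coordinate map -/
def seqL (n : ℕ) : Xpw p w →ₗ[ℝ] ℝ where
  toFun x := seq x n
  map_add' x y := seq_add x y n
  map_smul' c x := seq_smul c x n

/-- linear map to the `ℓ_2` coordinate -/
def toL2 : Xpw p w →ₗ[ℝ] Seq2 where
  toFun x := (Xpw.pair x).2
  map_add' x y := rfl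
  map_smul' c x := rfl

theorem nrm2_eq (x : Xpw p w) : nrm2 x = ‖toL2 x‖ := rfl

theorem nrmP_smul (c : ℝ) (x : Xpw p w) : nrmP (c • x) = |c| * nrmP x := by
  change ‖c • (Xpw.pair x).1‖ = _
  rw [norm_smul]; rfl

theorem nrm2_smul (c : ℝ) (x : Xpw p w) : nrm2 (c • x) = |c| * nrm2 x := by
  change ‖c • (Xpw.pair x).2‖ = _
  rw [norm_smul]; rfl

theorem hasSum_P (hp : 2 < p) (x : Xpw p w) :
    HasSum (fun n => |seq x n| ^ p) (nrmP x ^ p) := by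
  have h0 : (ENNReal.ofReal p).toReal = p := ENNReal.toReal_ofReal (by linarith)
  have := lp.hasSum_norm (p := ENNReal.ofReal p) (by rw [h0]; linarith) (Xpw.pair x).1
  rw [h0] at this
  exact this

theorem hasSum_2 (x : Xpw p w) :
    HasSum (fun n => (w n * seq x n) ^ 2) (nrm2 x ^ 2) := by
  have := lp.hasSum_norm (p := 2) (by norm_num) (Xpw.pair x).2
  simp only [ENNReal.toReal_ofNat, Real.rpow_two, Real.norm_eq_abs, sq_abs] at this
  simp only [pair_snd] at this
  exact this

theorem seq_le (hp : 2 < p) (x : Xpw p w) (n : ℕ) : |seq x n| ≤ ‖x‖ := by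
  refine le_trans ?_ (nrmP_le x)
  have := le_hasSum (hasSum_P hp x) n (fun j _ => by positivity)
  exact (Real.rpow_le_rpow_iff (abs_nonneg _) (nrmP_nonneg x) (by linarith)).1 this

/-- continuous coordinate map -/
def seqC (hp : 2 < p) (n : ℕ) : Xpw p w →L[ℝ] ℝ :=
  (seqL n).mkContinuous 1 (fun x => by rw [one_mul]; exact seq_le hp x n)

theorem seqC_apply (hp : 2 < p) (n : ℕ) (x : Xpw p w) : seqC hp n x = seq x n := rfl

/-- finitely supported vectors -/
def ofFin (F : Finset ℕ) (a : ℕ → ℝ) : Xpw p w := ∑ n ∈ F, a n • bas n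

theorem seq_ofFin (F : Finset ℕ) (a : ℕ → ℝ) (k : ℕ) :
    seq (ofFin F a : Xpw p w) k = if k ∈ F then a k else 0 := by
  change seqL k (ofFin F a : Xpw p w) = _
  rw [ofFin, map_sum]
  simp only [map_smul]
  change ∑ n ∈ F, a n • seq (bas n : Xpw p w) k = _
  simp [seq_bas]

theorem nrmP_ofFin (hp : 2 < p) (F : Finset ℕ) (a : ℕ → ℝ) :
    nrmP (ofFin F a : Xpw p w) ^ p = ∑ n ∈ F, |a n| ^ p := by
  have h1 := hasSum_P hp (ofFin F a : Xpw p w)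
  have h2 : HasSum (fun n => |seq (ofFin F a : Xpw p w) n| ^ p)
      (∑ n ∈ F, |seq (ofFin F a : Xpw p w) n| ^ p) := by
    apply hasSum_sum_of_ne_finset_zero
    intro b hb
    rw [seq_ofFin, if_neg hb, abs_zero, Real.zero_rpow (by linarith)]
  rw [h1.unique h2]
  exact Finset.sum_congr rfl fun n hn => by rw [seq_ofFin, if_pos hn]

theorem nrm2_ofFin (F : Finset ℕ) (a : ℕ → ℝ) :
    nrm2 (ofFin F a : Xpw p w) ^ 2 = ∑ n ∈ F, (w n * a n) ^ 2 := by
  have h1 := hasSum_2 (ofFin F a : Xpw p w)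
  have h2 : HasSum (fun n => (w n * seq (ofFin F a : Xpw p w) n) ^ 2)
      (∑ n ∈ F, (w n * seq (ofFin F a : Xpw p w) n) ^ 2) := by
    apply hasSum_sum_of_ne_finset_zero
    intro b hb
    rw [seq_ofFin, if_neg hb]; simp
  rw [h1.unique h2]
  exact Finset.sum_congr rfl fun n hn => by rw [seq_ofFin, if_pos hn]

theorem sum_P_le (hp : 2 < p) (x : Xpw p w) (F : Finset ℕ) :
    ∑ n ∈ F, |seq x n| ^ p ≤ nrmP x ^ p :=
  sum_le_hasSum F (fun _ _ => by positivity) (hasSum_P hp x)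

theorem sum_2_le (x : Xpw p w) (F : Finset ℕ) :
    ∑ n ∈ F, (w n * seq x n) ^ 2 ≤ nrm2 x ^ 2 :=
  sum_le_hasSum F (fun _ _ => by positivity) (hasSum_2 x)

theorem nrmP_proj_le (hp : 2 < p) (x : Xpw p w) (F : Finset ℕ) :
    nrmP (ofFin F (seq x) : Xpw p w) ≤ nrmP x := by
  refine (Real.rpow_le_rpow_iff (nrmP_nonneg _) (nrmP_nonneg x) (by linarith : 0 < p)).1 ?_
  rw [nrmP_ofFin hp]; exact sum_P_le hp x F

theorem nrm2_proj_le (x : Xpw p w) (F : Finset ℕ) :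
    nrm2 (ofFin F (seq x) : Xpw p w) ≤ nrm2 x := by
  refine (sq_le_sq₀ (nrm2_nonneg _) (nrm2_nonneg x)).1 ?_
  rw [nrm2_ofFin]; exact sum_2_le x F

theorem seq_restrict (E : Set ℕ) (x : Xpw p w) (n : ℕ) :
    seq (restrict E x) n = E.indicator (seq x) n := rfl

theorem restrict_eq (F : Finset ℕ) (x : Xpw p w) :
    restrict (F : Set ℕ) x = ofFin F (seq x) := by
  apply seq_ext
  intro n
  rw [seq_restrict, seq_ofFin, Set.indicator_apply]
  simp

theorem ofFin_smul (F : Finset ℕ) (x : Xpw p w) (c : ℝ) :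
    (ofFin F (seq (c • x)) : Xpw p w) = c • ofFin F (seq x) := by
  apply seq_ext
  intro n
  rw [seq_smul, seq_ofFin, seq_ofFin, seq_smul]
  split_ifs <;> simp

theorem ofFin_tendsto (hp : 2 < p) (x : Xpw p w) :
    Filter.Tendsto (fun L => (ofFin (Finset.range L) (seq x) : Xpw p w)) Filter.atTop (nhds x) := by
  rw [tendsto_iff_norm_sub_tendsto_zero]
  have hh : ∀ L n, seq (ofFin (Finset.range L) (seq x) - x) n =
      if n < L then 0 else - seq x n := by
    intro L n
    have : seq (ofFin (Finset.range L) (seq x) - x) n =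
      seq (ofFin (Finset.range L) (seq x) : Xpw p w) n - seq x n := rfl
    rw [this, seq_ofFin]
    simp only [Finset.mem_range]
    split_ifs <;> simp
  have hP : ∀ L, nrmP (ofFin (Finset.range L) (seq x) - x) ^ p
      = nrmP x ^ p - ∑ n ∈ Finset.range L, |seq x n| ^ p := by
    intro L
    have h1 := hasSum_P hp (ofFin (Finset.range L) (seq x) - x)
    have h2 : HasSum (fun n => if n ∈ Finset.range L then |seq x n| ^ p else 0)
        (∑ n ∈ Finset.range L, |seq x n| ^ p) := by
      have := hasSum_sum_of_ne_finset_zero (L := SummationFilter.unconditional ℕ)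
        (s := Finset.range L)
        (f := fun n => if n ∈ Finset.range L then |seq x n| ^ p else 0)
        (fun b hb => if_neg hb)
      convert this using 1
      exact Finset.sum_congr rfl fun n hn => by rw [if_pos hn]
    have h3 := (hasSum_P hp x).sub h2
    refine h1.unique (h3.congr_fun ?_) 
    intro n
    rw [hh]
    by_cases hn : n < L
    · simp [hn, Real.zero_rpow (by linarith : p ≠ 0)]
    · simp [hn]
  have h2 : ∀ L, nrm2 (ofFin (Finset.range L) (seq x) - x) ^ 2
      = nrm2 x ^ 2 - ∑ n ∈ Finset.range L, (w n * seq x n) ^ 2 := by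
    intro L
    have h1 := hasSum_2 (ofFin (Finset.range L) (seq x) - x)
    have h2 : HasSum (fun n => if n ∈ Finset.range L then (w n * seq x n) ^ 2 else 0)
        (∑ n ∈ Finset.range L, (w n * seq x n) ^ 2) := by
      have := hasSum_sum_of_ne_finset_zero (L := SummationFilter.unconditional ℕ)
        (s := Finset.range L)
        (f := fun n => if n ∈ Finset.range L then (w n * seq x n) ^ 2 else 0)
        (fun b hb => if_neg hb)
      convert this using 1
      exact Finset.sum_congr rfl fun n hn => by rw [if_pos hn]
    have h3 := (hasSum_2 x).sub h2
    refine h1.unique (h3.congr_fun ?_) 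
    intro n
    rw [hh]
    by_cases hn : n < L
    · simp [hn]
    · simp [hn]
  have tP : Filter.Tendsto (fun L => nrmP (ofFin (Finset.range L) (seq x) - x))
      Filter.atTop (nhds 0) := by
    have t1 := ((hasSum_P hp x).tendsto_sum_nat.const_sub (nrmP x ^ p)).rpow_const
      (p := p⁻¹) (Or.inr (by have : 0 < p := by linarith
                             positivity))
    rw [sub_self, Real.zero_rpow (by have : 0 < p := by linarith
                                     positivity)] at t1
    refine t1.congr fun L => ?_
    rw [← hP, Real.rpow_rpow_inv (nrmP_nonneg _) (by linarith)]
  have t2 : Filter.Tendsto (fun L => nrm2 (ofFin (Finset.range L) (seq x) - x))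
      Filter.atTop (nhds 0) := by
    have t1 := ((hasSum_2 x).tendsto_sum_nat.const_sub (nrm2 x ^ 2)).sqrt
    rw [sub_self, Real.sqrt_zero] at t1
    refine t1.congr fun L => ?_
    rw [← h2, Real.sqrt_sq (nrm2_nonneg _)]
  have := tP.max t2
  rw [max_self] at this
  exact this

theorem nrmP_add_disj (hp : 2 < p) (x y : Xpw p w) (h : ∀ n, seq x n = 0 ∨ seq y n = 0) :
    nrmP (x + y) ^ p = nrmP x ^ p + nrmP y ^ p := by
  refine (hasSum_P hp (x + y)).unique (((hasSum_P hp x).add (hasSum_P hp y)).congr_fun ?_)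
  intro n
  rw [seq_add]
  rcases h n with h | h <;> simp [h, Real.zero_rpow (by linarith : p ≠ 0)]

theorem nrm2_add_disj (x y : Xpw p w) (h : ∀ n, seq x n = 0 ∨ seq y n = 0) :
    nrm2 (x + y) ^ 2 = nrm2 x ^ 2 + nrm2 y ^ 2 := by
  refine (hasSum_2 (x + y)).unique (((hasSum_2 x).add (hasSum_2 y)).congr_fun ?_)
  intro n
  rw [seq_add]
  rcases h n with h | h <;> simp [h]

theorem seq_sum {ι : Type*} (J : Finset ι) (y : ι → Xpw p w) (n : ℕ) :
    seq (∑ j ∈ J, y j) n = ∑ j ∈ J, seq (y j) n :=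
  map_sum (seqL n) y J

theorem sum_disj {ι : Type*} (hp : 2 < p) (F : ι → Finset ℕ) (y : ι → Xpw p w)
    (hF : ∀ i j, i ≠ j → Disjoint (F i) (F j)) (hy : ∀ j n, n ∉ F j → seq (y j) n = 0)
    (J : Finset ι) :
    nrmP (∑ j ∈ J, y j) ^ p = ∑ j ∈ J, nrmP (y j) ^ p ∧
    nrm2 (∑ j ∈ J, y j) ^ 2 = ∑ j ∈ J, nrm2 (y j) ^ 2 := by
  classical
  induction J using Finset.induction_on with
  | empty =>
    constructor
    · have : nrmP (0 : Xpw p w) = 0 := norm_zero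
      simp [this, Real.zero_rpow (by linarith : p ≠ 0)]
    · have : nrm2 (0 : Xpw p w) = 0 := norm_zero
      simp [this]
  | insert a s ha ih =>
    have hd : ∀ n, seq (y a) n = 0 ∨ seq (∑ j ∈ s, y j) n = 0 := by
      intro n
      by_cases hn : n ∈ F a
      · right
        rw [seq_sum]
        refine Finset.sum_eq_zero fun j hj => hy j n fun hnj => ?_
        have : a ≠ j := by rintro rfl; exact ha hj
        exact Finset.disjoint_left.1 (hF a j this) hn hnj
      · exact Or.inl (hy a n hn)
    rw [Finset.sum_insert ha, Finset.sum_insert ha, Finset.sum_insert ha,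
      nrmP_add_disj hp _ _ hd, nrm2_add_disj _ _ hd, ih.1, ih.2]
    exact ⟨rfl, rfl⟩

end Basic

section Weights

/-- `μ_n = w_n^{2p/(p-2)}` -/
def mu (p : ℝ) (w : ℕ → ℝ) (n : ℕ) : ℝ := w n ^ (2 * p / (p - 2))

/-- `b_n = w_n^{2/(p-2)}` -/
def bb (p : ℝ) (w : ℕ → ℝ) (n : ℕ) : ℝ := w n ^ (2 / (p - 2))

/-- `μ(F)` -/
def muF (p : ℝ) (w : ℕ → ℝ) (F : Finset ℕ) : ℝ := ∑ n ∈ F, mu p w n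

theorem mu_pos (hw : ∀ n, 0 < w n) (n : ℕ) : 0 < mu p w n := Real.rpow_pos_of_pos (hw n) _
theorem bb_pos (hw : ∀ n, 0 < w n) (n : ℕ) : 0 < bb p w n := Real.rpow_pos_of_pos (hw n) _
theorem muF_nonneg (hw : ∀ n, 0 < w n) (F : Finset ℕ) : 0 ≤ muF p w F :=
  Finset.sum_nonneg fun n _ => (mu_pos hw n).le

theorem bb_pow (hw : ∀ n, 0 < w n) (n : ℕ) : bb p w n ^ p = mu p w n := by
  rw [bb, mu, ← Real.rpow_mul (hw n).le]
  congr 1; ring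

theorem wbb_sq (hp : 2 < p) (hw : ∀ n, 0 < w n) (n : ℕ) : (w n * bb p w n) ^ 2 = mu p w n := by
  have : p - 2 ≠ 0 := by linarith
  have h1 : w n * bb p w n = w n ^ (1 + 2 / (p - 2)) := by
    rw [bb, Real.rpow_add (hw n), Real.rpow_one]
  rw [h1, ← Real.rpow_two, ← Real.rpow_mul (hw n).le, mu]
  congr 1
  field_simp
  ring

variable [Fact (1 ≤ ENNReal.ofReal p)]

/-- simple function with values `u` on `F`. -/
def sim (F : Finset ℕ) (u : ℕ → ℝ) : Xpw p w := ofFin F (fun n => u n * bb p w n)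

theorem nrmP_sim (hp : 2 < p) (hw : ∀ n, 0 < w n) (F : Finset ℕ) (u : ℕ → ℝ) :
    nrmP (sim F u : Xpw p w) ^ p = ∑ n ∈ F, |u n| ^ p * mu p w n := by
  rw [sim, nrmP_ofFin hp]
  refine Finset.sum_congr rfl fun n _ => ?_
  rw [abs_mul, Real.mul_rpow (abs_nonneg _) (abs_nonneg _), abs_of_pos (bb_pos hw n), bb_pow hw]

theorem nrm2_sim (hp : 2 < p) (hw : ∀ n, 0 < w n) (F : Finset ℕ) (u : ℕ → ℝ) :
    nrm2 (sim F u : Xpw p w) ^ 2 = ∑ n ∈ F, u n ^ 2 * mu p w n := by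
  rw [sim, nrm2_ofFin]
  refine Finset.sum_congr rfl fun n _ => ?_
  rw [← wbb_sq hp hw n]; ring

theorem nrmP_of_pow (hp : 2 < p) (x : Xpw p w) {D : ℝ} (h : nrmP x ^ p = D) :
    nrmP x = D ^ (1 / p) := by
  rw [← h, one_div, Real.rpow_rpow_inv (nrmP_nonneg x) (by linarith)]

theorem nrm2_of_pow (x : Xpw p w) {D : ℝ} (h : nrm2 x ^ 2 = D) :
    nrm2 x = Real.sqrt D := by
  rw [← h, Real.sqrt_sq (nrm2_nonneg x)]

/-- density of a functional -/
def dens (ψ : Xpw p w →ₗ[ℝ] ℝ) (n : ℕ) : ℝ := ψ (bb p w n • bas n) / mu p w n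

theorem psi_sim (hw : ∀ n, 0 < w n) (ψ : Xpw p w →ₗ[ℝ] ℝ) (F : Finset ℕ) (u : ℕ → ℝ) :
    ψ (sim F u) = ∑ n ∈ F, u n * dens ψ n * mu p w n := by
  rw [sim, ofFin, map_sum]
  refine Finset.sum_congr rfl fun n _ => ?_
  have := (mu_pos (p := p) hw n).ne'
  rw [dens, mul_smul, map_smul, smul_eq_mul]
  field_simp

theorem split_large (hp : 2 < p) (hw : ∀ n, 0 < w n) (ψ : Xpw p w →ₗ[ℝ] ℝ) {Λ τ : ℝ}
    (hψ : ∀ z, |ψ z| ≤ Λ * ‖z‖) (hΛ : 0 ≤ Λ) (hτ : Λ < τ) (G : Finset ℕ)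
    (hG : ∀ n ∈ G, τ ≤ |dens ψ n|) : muF p w G ^ (1 - 1 / p) ≤ Λ / τ := by
  have hp0 : 0 < p := by linarith
  have hτ0 : 0 < τ := lt_of_le_of_lt hΛ hτ
  set D := muF p w G with hD
  have hD0 : 0 ≤ D := muF_nonneg hw G
  rcases hD0.eq_or_lt with h0 | hDpos
  · rw [← h0, Real.zero_rpow]
    · positivity
    · have : 1 / p < 1 := by rw [div_lt_one hp0]; linarith
      linarith
  set u : ℕ → ℝ := fun n => if 0 ≤ dens ψ n then 1 else -1 with hu
  have hu1 : ∀ n, |u n| = 1 := by intro n; simp only [hu]; split_ifs <;> simp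
  have hu2 : ∀ n, u n * dens ψ n = |dens ψ n| := by
    intro n; simp only [hu]; split_ifs with h
    · rw [abs_of_nonneg h, one_mul]
    · rw [abs_of_neg (not_le.1 h)]; ring
  have e1 : nrmP (sim G u : Xpw p w) = D ^ (1 / p) := by
    apply nrmP_of_pow hp
    rw [nrmP_sim hp hw]
    simp [hu1, hD, muF]
  have e2 : nrm2 (sim G u : Xpw p w) = Real.sqrt D := by
    apply nrm2_of_pow
    rw [nrm2_sim hp hw]
    have : ∀ n, u n ^ 2 = 1 := fun n => by rw [← sq_abs, hu1]; norm_num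
    simp [this, hD, muF]
  have e3 : τ * D ≤ ψ (sim G u) := by
    rw [psi_sim hw, hD, muF, Finset.mul_sum]
    refine Finset.sum_le_sum fun n hn => ?_
    rw [hu2]
    exact mul_le_mul_of_nonneg_right (hG n hn) (mu_pos hw n).le
  have e4 := (le_abs_self _).trans (hψ (sim G u))
  rw [norm_eq_max, e1, e2, Real.sqrt_eq_rpow] at e4
  have hD1 : D ≤ 1 := by
    by_contra h
    push Not at h
    have i1 : D ^ (1 / p) ≤ D := by
      calc D ^ (1 / p) ≤ D ^ (1:ℝ) :=
            Real.rpow_le_rpow_of_exponent_le h.le (by rw [div_le_one hp0]; linarith)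
        _ = D := Real.rpow_one D
    have i2 : D ^ ((1:ℝ) / 2) ≤ D := by
      calc D ^ ((1:ℝ) / 2) ≤ D ^ (1:ℝ) :=
            Real.rpow_le_rpow_of_exponent_le h.le (by norm_num)
        _ = D := Real.rpow_one D
    have := mul_le_mul_of_nonneg_left (max_le i1 i2) hΛ
    nlinarith
  have i3 : D ^ ((1:ℝ) / 2) ≤ D ^ (1 / p) :=
    Real.rpow_le_rpow_of_exponent_ge hDpos hD1
      (one_div_le_one_div_of_le (by norm_num) hp.le)
  rw [max_eq_left i3] at e4
  rw [Real.rpow_sub hDpos, Real.rpow_one, div_le_div_iff₀ (by positivity) hτ0]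
  linarith

theorem split_small (hp : 2 < p) (hw : ∀ n, 0 < w n) (ψ : Xpw p w →ₗ[ℝ] ℝ) {Λ τ : ℝ}
    (hψ : ∀ z, |ψ z| ≤ Λ * ‖z‖) (hΛ : 0 ≤ Λ) (hτ : 0 < τ) (G : Finset ℕ)
    (hG : ∀ n ∈ G, |dens ψ n| ≤ τ) :
    (∑ n ∈ G, dens ψ n ^ 2 * mu p w n) ^ (1 - 1 / p) ≤ Λ * τ ^ ((p - 2) / p) ∨
    (∑ n ∈ G, dens ψ n ^ 2 * mu p w n) ≤ Λ ^ 2 := by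
  have hp0 : 0 < p := by linarith
  set A := ∑ n ∈ G, dens ψ n ^ 2 * mu p w n with hA
  have hA0 : 0 ≤ A := Finset.sum_nonneg fun n _ => mul_nonneg (sq_nonneg _) (mu_pos hw n).le
  rcases hA0.eq_or_lt with h0 | hApos
  · right; rw [← h0]; positivity
  have e1 : nrmP (sim G (dens ψ) : Xpw p w) ≤ τ ^ ((p - 2) / p) * A ^ (1 / p) := by
    refine (Real.rpow_le_rpow_iff (nrmP_nonneg _) (by positivity) hp0).1 ?_
    rw [nrmP_sim hp hw, Real.mul_rpow (by positivity) (by positivity), ← Real.rpow_mul hτ.le,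
      ← Real.rpow_mul hA0, div_mul_cancel₀ _ hp0.ne', div_mul_cancel₀ _ hp0.ne', Real.rpow_one,
      hA, Finset.mul_sum]
    refine Finset.sum_le_sum fun n hn => ?_
    rw [← mul_assoc]
    refine mul_le_mul_of_nonneg_right ?_ (mu_pos hw n).le
    rcases (abs_nonneg (dens ψ n)).eq_or_lt with h | h
    · rw [← h, Real.zero_rpow hp0.ne']; positivity
    · calc |dens ψ n| ^ p = |dens ψ n| ^ (p - 2) * |dens ψ n| ^ (2:ℝ) := by
            rw [← Real.rpow_add h]; congr 1; ring
        _ ≤ τ ^ (p - 2) * dens ψ n ^ 2 := by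
            rw [Real.rpow_two, sq_abs]
            refine mul_le_mul_of_nonneg_right ?_ (sq_nonneg _)
            exact Real.rpow_le_rpow h.le (hG n hn) (by linarith)
  have e2 : nrm2 (sim G (dens ψ) : Xpw p w) = Real.sqrt A := by
    apply nrm2_of_pow
    rw [nrm2_sim hp hw]
  have e3 : ψ (sim G (dens ψ)) = A := by
    rw [psi_sim hw, hA]
    exact Finset.sum_congr rfl fun n _ => by ring
  have e4 := (le_abs_self _).trans (hψ (sim G (dens ψ)))
  rw [norm_eq_max, e2, e3] at e4
  rcases le_total (nrmP (sim G (dens ψ) : Xpw p w)) (Real.sqrt A) with h | h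
  · right
    rw [max_eq_right h] at e4
    have hs : Real.sqrt A * Real.sqrt A = A := Real.mul_self_sqrt hA0
    have hs0 : 0 < Real.sqrt A := Real.sqrt_pos.2 hApos
    have : Real.sqrt A ≤ Λ := by
      by_contra hc
      push Not at hc
      nlinarith
    nlinarith
  · left
    rw [max_eq_left h] at e4
    rw [Real.rpow_sub hApos, Real.rpow_one, div_le_iff₀ (by positivity)]
    calc A ≤ _ := e4
      _ ≤ Λ * (τ ^ ((p - 2) / p) * A ^ (1 / p)) := by gcongr
      _ = _ := by ring

theorem psi_proj (hp : 2 < p) (hw : ∀ n, 0 < w n) (ψ : Xpw p w →ₗ[ℝ] ℝ) (x : Xpw p w)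
    (G : Finset ℕ) :
    |ψ (ofFin G (seq x))| ≤ nrm2 x * Real.sqrt (∑ n ∈ G, dens ψ n ^ 2 * mu p w n) := by
  have h1 : (ofFin G (seq x) : Xpw p w) = sim G (fun n => seq x n / bb p w n) := by
    rw [sim]
    congr 1
    funext n
    rw [div_mul_cancel₀ _ (bb_pos hw n).ne']
  have h2 : ψ (ofFin G (seq x)) =
      ∑ n ∈ G, (w n * seq x n) * (dens ψ n * (w n * bb p w n)) := by
    rw [h1, psi_sim hw]
    refine Finset.sum_congr rfl fun n _ => ?_
    rw [← wbb_sq hp hw n]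
    have := (bb_pos (p := p) hw n).ne'
    field_simp
  have h3 := Finset.sum_mul_sq_le_sq_mul_sq G (fun n => w n * seq x n)
    (fun n => dens ψ n * (w n * bb p w n))
  have h4 : ∑ n ∈ G, (dens ψ n * (w n * bb p w n)) ^ 2 = ∑ n ∈ G, dens ψ n ^ 2 * mu p w n :=
    Finset.sum_congr rfl fun n _ => by rw [← wbb_sq hp hw n]; ring
  rw [h4, ← h2] at h3
  have hA0 : 0 ≤ ∑ n ∈ G, dens ψ n ^ 2 * mu p w n :=
    Finset.sum_nonneg fun n _ => mul_nonneg (sq_nonneg _) (mu_pos hw n).le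
  refine abs_le_of_sq_le_sq ?_ (mul_nonneg (nrm2_nonneg x) (Real.sqrt_nonneg _))
  rw [mul_pow, Real.sq_sqrt hA0]
  exact h3.trans (mul_le_mul_of_nonneg_right (sum_2_le x G) hA0)

/-- `f_F = 1_F` -/
def ff (F : Finset ℕ) : Xpw p w := sim F (fun _ => 1)

theorem nrmP_ff (hp : 2 < p) (hw : ∀ n, 0 < w n) (F : Finset ℕ) :
    nrmP (ff F : Xpw p w) ^ p = muF p w F := by
  rw [ff, nrmP_sim hp hw]; simp [muF]

theorem nrm2_ff (hp : 2 < p) (hw : ∀ n, 0 < w n) (F : Finset ℕ) :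
    nrm2 (ff F : Xpw p w) ^ 2 = muF p w F := by
  rw [ff, nrm2_sim hp hw]; simp [muF]

theorem inner_ff (F : Finset ℕ) (x : Xpw p w) :
    inner ℝ (toL2 (ff F : Xpw p w)) (toL2 x) = ∑ n ∈ F, (w n * bb p w n) * (w n * seq x n) := by
  have h1 := lp.hasSum_inner (𝕜 := ℝ) (toL2 (ff F : Xpw p w)) (toL2 x)
  have h0 : ∀ n, inner ℝ ((toL2 (ff F : Xpw p w) : ℕ → ℝ) n) ((toL2 x : ℕ → ℝ) n)
      = if n ∈ F then (w n * bb p w n) * (w n * seq x n) else 0 := by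
    intro n
    have a1 : (toL2 (ff F : Xpw p w) : ℕ → ℝ) n = w n * seq (ff F : Xpw p w) n := pair_snd _ n
    have a2 : (toL2 x : ℕ → ℝ) n = w n * seq x n := pair_snd _ n
    rw [a1, a2, ff, sim, seq_ofFin]
    split_ifs <;> simp [mul_comm]
  have h2 := hasSum_sum_of_ne_finset_zero (L := SummationFilter.unconditional ℕ) (s := F)
    (f := fun n => inner ℝ ((toL2 (ff F : Xpw p w) : ℕ → ℝ) n) ((toL2 x : ℕ → ℝ) n))
    (fun b hb => by rw [h0, if_neg hb])
  rw [h1.unique h2]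
  exact Finset.sum_congr rfl fun n hn => by rw [h0, if_pos hn]

theorem inner_ff_self (hp : 2 < p) (hw : ∀ n, 0 < w n) (F : Finset ℕ) :
    inner ℝ (toL2 (ff F : Xpw p w)) (toL2 (ff F : Xpw p w)) = muF p w F := by
  rw [real_inner_self_eq_norm_sq, ← nrm2_eq, nrm2_ff hp hw]

theorem inner_ff_le (hp : 2 < p) (hw : ∀ n, 0 < w n) (F : Finset ℕ) (x : Xpw p w) :
    |inner ℝ (toL2 (ff F : Xpw p w)) (toL2 x)| ≤ muF p w F ^ (1 - 1 / p) * ‖x‖ := by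
  have hp0 : 0 < p := by linarith
  have hpq : Real.HolderConjugate (p / (p - 1)) p :=
    (Real.HolderConjugate.conjExponent (by linarith : 1 < p)).symm
  rw [inner_ff]
  refine (Finset.abs_sum_le_sum_abs _ _).trans ?_
  have e : ∀ n ∈ F, |(w n * bb p w n) * (w n * seq x n)| =
      (mu p w n ^ (1 - 1 / p)) * |seq x n| := by
    intro n _
    have : (w n * bb p w n) * (w n * seq x n) = (mu p w n / bb p w n) * seq x n := by
      rw [← wbb_sq hp hw n]
      have := (bb_pos (p := p) hw n).ne'
      field_simp
    rw [this, abs_mul, abs_of_pos (div_pos (mu_pos hw n) (bb_pos hw n)),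
      Real.rpow_sub (mu_pos hw n), Real.rpow_one, ← bb_pow hw n, ← Real.rpow_mul (bb_pos hw n).le,
      mul_one_div_cancel hp0.ne', Real.rpow_one]
  rw [Finset.sum_congr rfl e]
  refine (Real.inner_le_Lp_mul_Lq_of_nonneg F hpq
    (fun n _ => Real.rpow_nonneg (mu_pos hw n).le _) (fun n _ => abs_nonneg _)).trans ?_
  have e2 : ∀ n ∈ F, (mu p w n ^ (1 - 1 / p)) ^ (p / (p - 1)) = mu p w n := by
    intro n _
    rw [← Real.rpow_mul (mu_pos hw n).le]
    have h : (1 - 1 / p) * (p / (p - 1)) = 1 := by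
      have : p - 1 ≠ 0 := by linarith
      field_simp
    rw [h, Real.rpow_one]
  have e3 : 1 / (p / (p - 1)) = 1 - 1 / p := by field_simp
  rw [Finset.sum_congr rfl e2, e3]
  refine mul_le_mul_of_nonneg_left ?_ (Real.rpow_nonneg (muF_nonneg hw F) _)
  refine le_trans ?_ (nrmP_le x)
  rw [nrmP_of_pow hp x rfl]
  exact Real.rpow_le_rpow (Finset.sum_nonneg fun _ _ => by positivity) (sum_P_le hp x F)
    (by positivity)

theorem holder_E (hp : 2 < p) (hw : ∀ n, 0 < w n) (E : Finset ℕ) (x : Xpw p w) :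
    nrm2 (ofFin E (seq x) : Xpw p w) ≤ ‖x‖ * muF p w E ^ ((p - 2) / (2 * p)) := by
  have hp0 : 0 < p := by linarith
  have hp2 : 0 < p - 2 := by linarith
  have hpq : Real.HolderConjugate (p / 2) (p / (p - 2)) := by
    refine Real.holderConjugate_iff.2 ⟨by linarith, ?_⟩
    field_simp
    ring
  have h := Real.inner_le_Lp_mul_Lq_of_nonneg E hpq (f := fun n => seq x n ^ 2)
    (g := fun n => w n ^ 2) (fun n _ => sq_nonneg _) (fun n _ => sq_nonneg _)
  have e1 : ∀ n ∈ E, (seq x n ^ 2) ^ (p / 2) = |seq x n| ^ p := by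
    intro n _
    rw [← sq_abs, ← Real.rpow_two, ← Real.rpow_mul (abs_nonneg _)]
    congr 1; ring
  have e2 : ∀ n ∈ E, (w n ^ 2) ^ (p / (p - 2)) = mu p w n := by
    intro n _
    rw [← Real.rpow_two, ← Real.rpow_mul (hw n).le, mu]
    congr 1; ring
  rw [Finset.sum_congr rfl e1, Finset.sum_congr rfl e2] at h
  have h5 : nrm2 (ofFin E (seq x) : Xpw p w) ^ 2 ≤
      (‖x‖ * muF p w E ^ ((p - 2) / (2 * p))) ^ 2 := by
    rw [nrm2_ofFin]
    calc ∑ n ∈ E, (w n * seq x n) ^ 2 = ∑ n ∈ E, seq x n ^ 2 * w n ^ 2 :=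
          Finset.sum_congr rfl fun n _ => by ring
      _ ≤ _ := h
      _ ≤ ((‖x‖) ^ p) ^ (1 / (p / 2)) * muF p w E ^ (1 / (p / (p - 2))) := by
          refine mul_le_mul_of_nonneg_right ?_ (Real.rpow_nonneg (muF_nonneg hw E) _)
          refine Real.rpow_le_rpow (Finset.sum_nonneg fun _ _ => by positivity)
            ((sum_P_le hp x E).trans ?_) (by positivity)
          exact Real.rpow_le_rpow (nrmP_nonneg x) (nrmP_le x) hp0.le
      _ = _ := by
          rw [mul_pow, ← Real.rpow_mul (norm_nonneg x), ← Real.rpow_two, ← Real.rpow_two,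
            ← Real.rpow_mul (muF_nonneg hw E)]
          congr 2
          · field_simp
          · field_simp
  exact (sq_le_sq₀ (nrm2_nonneg _) (mul_nonneg (norm_nonneg _)
    (Real.rpow_nonneg (muF_nonneg hw E) _))).1 h5

theorem exists_blocks (hp : 2 < p) (hw : IsXpWeight p w) {m : ℝ} (hm : 0 < m) :
    ∃ F : ℕ → Finset ℕ, (∀ j, m ≤ muF p w (F j) ∧ muF p w (F j) ≤ 2 * m) ∧
      ∀ i j, i ≠ j → Disjoint (F i) (F j) := by
  classical
  obtain ⟨hw0, hw1⟩ := hw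
  have hp0 : 0 < p := by linarith
  have hp2 : 0 < p - 2 := by linarith
  have key : ∀ B : Finset ℕ, ∃ F : Finset ℕ, (m ≤ muF p w F ∧ muF p w F ≤ 2 * m) ∧
      Disjoint B F := by
    intro B
    set ε := m ^ ((p - 2) / (2 * p)) with hε
    have h1 := hw1 ε (Real.rpow_pos_of_pos hm _)
    have hsmall : ∀ n, w n < ε → mu p w n ≤ m := by
      intro n hn
      calc mu p w n ≤ ε ^ (2 * p / (p - 2)) :=
            Real.rpow_le_rpow (hw0 n).le hn.le (by positivity)
        _ = m := by
            rw [hε, ← Real.rpow_mul hm.le]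
            have : (p - 2) / (2 * p) * (2 * p / (p - 2)) = 1 := by field_simp
            rw [this, Real.rpow_one]
    -- find a finite set of large measure
    have h2 : ∃ G : Finset ℕ, (∀ n ∈ G, w n < ε) ∧ m + muF p w B ≤ muF p w G := by
      by_contra hcon
      push Not at hcon
      have : (∑' n : {n : ℕ | w n < ε}, ENNReal.ofReal (w (n : ℕ) ^ (2 * p / (p - 2))))
          ≤ ENNReal.ofReal (m + muF p w B) := by
        rw [ENNReal.tsum_eq_iSup_sum]
        refine iSup_le fun s => ?_
        change ∑ a ∈ s, ENNReal.ofReal (mu p w (a : ℕ)) ≤ _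
        rw [← ENNReal.ofReal_sum_of_nonneg (f := fun a : {n : ℕ | w n < ε} => mu p w (a : ℕ))
          (fun n _ => (mu_pos hw0 (n : ℕ)).le)]
        apply ENNReal.ofReal_le_ofReal
        have h3 := hcon (s.map (Function.Embedding.subtype _)) (by
          intro n hn
          obtain ⟨a, _, rfl⟩ := Finset.mem_map.1 hn
          exact a.2)
        rw [muF, Finset.sum_map] at h3
        exact h3.le
      rw [h1] at this
      exact absurd this (by simp)
    obtain ⟨G, hG1, hG2⟩ := h2
    have h4 : m ≤ muF p w (G \ B) := by
      have : muF p w G ≤ muF p w (G \ B) + muF p w B := by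
        rw [muF, muF, muF, ← Finset.sum_union Finset.sdiff_disjoint]
        refine Finset.sum_le_sum_of_subset_of_nonneg ?_ fun n _ _ => (mu_pos hw0 n).le
        intro n hn
        by_cases n ∈ B <;> simp_all
      linarith
    have h5 : ∀ H : Finset ℕ, (∀ n ∈ H, w n < ε) → m ≤ muF p w H →
        ∃ F ⊆ H, m ≤ muF p w F ∧ muF p w F ≤ 2 * m := by
      intro H
      induction H using Finset.induction_on with
      | empty => intro _ h; simp [muF] at h; linarith
      | insert a s ha ih =>
        intro hh h
        by_cases hs : m ≤ muF p w s
        · obtain ⟨F, hF, hF'⟩ := ih (fun n hn => hh n (Finset.mem_insert_of_mem hn)) hs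
          exact ⟨F, hF.trans (Finset.subset_insert _ _), hF'⟩
        · refine ⟨_, subset_rfl, h, ?_⟩
          rw [muF, Finset.sum_insert ha]
          have := hsmall a (hh a (Finset.mem_insert_self _ _))
          rw [muF] at hs
          push Not at hs
          linarith
    obtain ⟨F, hF, hF'⟩ := h5 (G \ B) (fun n hn => hG1 n (Finset.sdiff_subset hn)) h4
    exact ⟨F, hF', Finset.disjoint_of_subset_right hF Finset.disjoint_sdiff⟩
  obtain ⟨F, hF, hd⟩ := exists_seq_of_forall_finset_exists
    (fun F : Finset ℕ => m ≤ muF p w F ∧ muF p w F ≤ 2 * m) (fun F G => Disjoint F G) (by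
      intro s _
      obtain ⟨F, hF, hd⟩ := key (s.biUnion id)
      exact ⟨F, hF, fun x hx => Finset.disjoint_of_subset_left
        (Finset.subset_biUnion_of_mem id hx) hd⟩)
  refine ⟨F, hF, fun i j hij => ?_⟩
  rcases lt_or_gt_of_ne hij with h | h
  · exact hd i j h
  · exact (hd j i h).symm

end Weights

section Main

variable [Fact (1 ≤ ENNReal.ofReal p)]

theorem sum_ff_bound (hp : 2 < p) (hw : ∀ n, 0 < w n) {m : ℝ} (hm : 0 < m) (F : ℕ → Finset ℕ)
    (hF : ∀ j, m ≤ muF p w (F j) ∧ muF p w (F j) ≤ 2 * m)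
    (hd : ∀ i j, i ≠ j → Disjoint (F i) (F j)) (σ : ℕ → ℝ) (hσ : ∀ i, σ i = 1 ∨ σ i = -1)
    (J : Finset ℕ) :
    nrm2 (∑ j ∈ J, σ j • (ff (F j) : Xpw p w)) ≤ Real.sqrt (2 * m * J.card) ∧
    (1 ≤ m * J.card →
      ‖∑ j ∈ J, σ j • (ff (F j) : Xpw p w)‖ ≤ Real.sqrt (2 * m * J.card)) := by
  have hp0 : 0 < p := by linarith
  have hσ1 : ∀ i, |σ i| = 1 := fun i => by rcases hσ i with h | h <;> simp [h]
  obtain ⟨h1, h2⟩ := sum_disj hp F (fun j => σ j • (ff (F j) : Xpw p w)) hd (by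
    intro j n hn
    rw [seq_smul, ff, sim, seq_ofFin, if_neg hn, mul_zero]) J
  have hs : ∑ j ∈ J, muF p w (F j) ≤ 2 * m * J.card := by
    calc ∑ j ∈ J, muF p w (F j) ≤ ∑ j ∈ J, 2 * m := Finset.sum_le_sum fun j _ => (hF j).2
      _ = _ := by rw [Finset.sum_const, nsmul_eq_mul]; ring
  have hs0 : 0 ≤ ∑ j ∈ J, muF p w (F j) := Finset.sum_nonneg fun j _ => muF_nonneg hw _
  simp only [nrmP_smul, nrm2_smul, hσ1, one_mul, nrmP_ff hp hw, nrm2_ff hp hw] at h1 h2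
  have h3 : nrm2 (∑ j ∈ J, σ j • (ff (F j) : Xpw p w)) ≤ Real.sqrt (2 * m * J.card) := by
    rw [nrm2_of_pow _ h2]
    exact Real.sqrt_le_sqrt hs
  refine ⟨h3, fun hJ => ?_⟩
  rw [norm_eq_max]
  refine max_le ?_ h3
  rw [nrmP_of_pow hp _ h1, Real.sqrt_eq_rpow]
  calc _ ≤ (2 * m * J.card) ^ (1 / p) := Real.rpow_le_rpow hs0 hs (by positivity)
    _ ≤ _ := Real.rpow_le_rpow_of_exponent_le (by nlinarith)
      (one_div_le_one_div_of_le (by norm_num) hp.le)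

theorem weak_null (hp : 2 < p) (hw : ∀ n, 0 < w n) {m : ℝ} (hm : 0 < m) (F : ℕ → Finset ℕ)
    (hF : ∀ j, m ≤ muF p w (F j) ∧ muF p w (F j) ≤ 2 * m)
    (hd : ∀ i j, i ≠ j → Disjoint (F i) (F j)) (g : Xpw p w →L[ℝ] ℝ) :
    Filter.Tendsto (fun j => g (ff (F j))) Filter.atTop (nhds 0) := by
  rw [Metric.tendsto_nhds]
  intro t ht
  have hfin : {j | t ≤ |g (ff (F j))|}.Finite := by
    by_contra hinf
    obtain ⟨M, hM⟩ := exists_nat_gt (max (1 / m) (‖g‖ ^ 2 * (2 * m) / t ^ 2))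
    have hM1 : 1 / m < M := lt_of_le_of_lt (le_max_left _ _) hM
    have hM2 : ‖g‖ ^ 2 * (2 * m) / t ^ 2 < M := lt_of_le_of_lt (le_max_right _ _) hM
    obtain ⟨J, hJ, hJc⟩ := Set.Infinite.exists_subset_card_eq hinf M
    rw [div_lt_iff₀ hm] at hM1
    rw [div_lt_iff₀ (by positivity)] at hM2
    set σ : ℕ → ℝ := fun j => if 0 ≤ g (ff (F j)) then 1 else -1 with hσ
    have h1 := (sum_ff_bound hp hw hm F hF hd σ
      (by intro i; simp only [hσ]; split_ifs <;> simp) J).2 (by rw [hJc]; linarith)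
    have h2 : (M : ℝ) * t ≤ g (∑ j ∈ J, σ j • (ff (F j) : Xpw p w)) := by
      rw [map_sum]
      calc (M : ℝ) * t = ∑ j ∈ J, t := by rw [Finset.sum_const, hJc, nsmul_eq_mul]
        _ ≤ _ := Finset.sum_le_sum fun j hj => by
          have h3 : t ≤ |g (ff (F j))| := hJ hj
          rw [map_smul, smul_eq_mul]
          simp only [hσ]
          split_ifs with h
          · rwa [one_mul, ← abs_of_nonneg h]
          · rw [abs_of_neg (not_le.1 h)] at h3; linarith
    have h3 := (le_abs_self _).trans (g.le_opNorm (∑ j ∈ J, σ j • (ff (F j) : Xpw p w)))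
    have h4 : (M : ℝ) * t ≤ ‖g‖ * Real.sqrt (2 * m * M) := by
      rw [hJc] at h1
      exact h2.trans (h3.trans (mul_le_mul_of_nonneg_left h1 (norm_nonneg _)))
    have hMpos : (0:ℝ) < M := by
      have : 0 ≤ 1 / m := by positivity
      nlinarith
    have h5 : ((M : ℝ) * t) ^ 2 ≤ (‖g‖ * Real.sqrt (2 * m * M)) ^ 2 :=
      pow_le_pow_left₀ (by positivity) h4 2
    rw [mul_pow ‖g‖, Real.sq_sqrt (by positivity)] at h5
    nlinarith
  have := hfin.compl_mem_cofinite
  rw [Nat.cofinite_eq_atTop] at this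
  filter_upwards [this] with j hj
  rw [Real.dist_eq, sub_zero]
  exact not_le.1 hj

theorem two_bound (hp : 2 < p) (hw : ∀ n, 0 < w n) {m : ℝ} (hm : 0 < m) (F : ℕ → Finset ℕ)
    (hF : ∀ j, m ≤ muF p w (F j) ∧ muF p w (F j) ≤ 2 * m)
    (hd : ∀ i j, i ≠ j → Disjoint (F i) (F j)) (T : Xpw p w →L[ℝ] Xpw p w) {K : ℝ} (hK : 1 ≤ K)
    (hT : ∀ z, ‖T z‖ ≤ K * ‖z‖) :
    ∀ᶠ j in Filter.atTop, nrm2 (T (ff (F j))) ^ 2 ≤ 2 * m * K ^ 2 := by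
  have hfin : {j | 2 * m * K ^ 2 < nrm2 (T (ff (F j))) ^ 2}.Finite := by
    by_contra hinf
    obtain ⟨M, hM⟩ := exists_nat_gt (1 / m)
    obtain ⟨J, hJ, hJc⟩ := Set.Infinite.exists_subset_card_eq hinf M
    rw [div_lt_iff₀ hm] at hM
    obtain ⟨σ, hσ, h⟩ := sign_choice
      (fun i j => inner ℝ (toL2 (T (ff (F i)))) (toL2 (T (ff (F j))))) J
    have h1 := (sum_ff_bound hp hw hm F hF hd σ hσ J).2 (by rw [hJc]; linarith)
    have h2 : ∑ i ∈ J, ∑ j ∈ J, σ i * σ j * inner ℝ (toL2 (T (ff (F i)))) (toL2 (T (ff (F j))))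
        = nrm2 (T (∑ j ∈ J, σ j • (ff (F j) : Xpw p w))) ^ 2 := by
      rw [nrm2_eq, ← real_inner_self_eq_norm_sq]
      simp only [map_sum, map_smul, sum_inner, inner_sum, real_inner_smul_left,
        real_inner_smul_right]
      rw [Finset.sum_comm]
      refine Finset.sum_congr rfl fun i _ => Finset.sum_congr rfl fun j _ => ?_
      rw [real_inner_comm]
      ring
    rw [h2] at h
    have h3 : nrm2 (T (∑ j ∈ J, σ j • (ff (F j) : Xpw p w))) ≤ K * Real.sqrt (2 * m * M) := by
      rw [hJc] at h1
      exact (nrm2_le _).trans ((hT _).trans (mul_le_mul_of_nonneg_left h1 (by linarith)))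
    have h4 := pow_le_pow_left₀ (nrm2_nonneg _) h3 2
    rw [mul_pow, Real.sq_sqrt (by positivity)] at h4
    have hMpos : 0 < M := by
      rcases Nat.eq_zero_or_pos M with h | h
      · rw [h] at hM; norm_num at hM
      · exact h
    have h5 : ∑ j ∈ J, 2 * m * K ^ 2 <
        ∑ i ∈ J, inner ℝ (toL2 (T (ff (F i)))) (toL2 (T (ff (F i)))) := by
      refine Finset.sum_lt_sum_of_nonempty (Finset.card_pos.1 (by omega)) fun j hj => ?_
      rw [real_inner_self_eq_norm_sq, ← nrm2_eq]
      exact hJ hj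
    rw [Finset.sum_const, hJc, nsmul_eq_mul] at h5
    nlinarith
  have := hfin.compl_mem_cofinite
  rw [Nat.cofinite_eq_atTop] at this
  filter_upwards [this] with j hj
  exact not_lt.1 hj

/-- the functional `⟨S ·, f_F⟩` -/
def psi (S : Xpw p w →L[ℝ] Xpw p w) (F : Finset ℕ) : Xpw p w →ₗ[ℝ] ℝ :=
  (innerₛₗ ℝ (toL2 (ff F : Xpw p w))) ∘ₗ toL2 ∘ₗ (S : Xpw p w →ₗ[ℝ] Xpw p w)

theorem psi_apply (S : Xpw p w →L[ℝ] Xpw p w) (F : Finset ℕ) (x : Xpw p w) :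
    psi S F x = inner ℝ (toL2 (ff F : Xpw p w)) (toL2 (S x)) := rfl

theorem psi_le (hp : 2 < p) (hw : ∀ n, 0 < w n) {m : ℝ} (hm : 0 < m) (F : Finset ℕ)
    (hF : muF p w F ≤ 2 * m) (S : Xpw p w →L[ℝ] Xpw p w) {K : ℝ} (hK : 1 ≤ K)
    (hS : ∀ z, ‖S z‖ ≤ K * ‖z‖) (z : Xpw p w) :
    |psi S F z| ≤ (K * (2 * m) ^ (1 - 1 / p)) * ‖z‖ := by
  have hp0 : 0 < p := by linarith
  have hq : 0 ≤ 1 - 1 / p := by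
    have : 1 / p ≤ 1 := by rw [div_le_one hp0]; linarith
    linarith
  rw [psi_apply]
  calc _ ≤ muF p w F ^ (1 - 1 / p) * ‖S z‖ := inner_ff_le hp hw F (S z)
    _ ≤ (2 * m) ^ (1 - 1 / p) * (K * ‖z‖) :=
      mul_le_mul (Real.rpow_le_rpow (muF_nonneg hw F) hF hq) (hS z) (norm_nonneg _) (by positivity)
    _ = _ := by ring

theorem proj_tendsto (hp : 2 < p) (x : ℕ → Xpw p w)
    (hx : ∀ n, Filter.Tendsto (fun j => seq (x j) n) Filter.atTop (nhds 0)) (N : ℕ) :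
    Filter.Tendsto (fun j => (ofFin (Finset.range N) (seq (x j)) : Xpw p w))
      Filter.atTop (nhds 0) := by
  have := tendsto_finsetSum (Finset.range N)
    (fun n _ => (hx n).smul_const (bas n : Xpw p w))
  simpa [ofFin] using this

theorem select (hp : 2 < p) (hw : ∀ n, 0 < w n) {m : ℝ} (hm : 0 < m) (F : ℕ → Finset ℕ)
    (hF : ∀ j, m ≤ muF p w (F j) ∧ muF p w (F j) ≤ 2 * m)
    (hd : ∀ i j, i ≠ j → Disjoint (F i) (F j)) (T S : Xpw p w →L[ℝ] Xpw p w) {K : ℝ} (hK : 1 ≤ K)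
    (hT : ∀ z, ‖T z‖ ≤ K * ‖z‖) (hS : ∀ z, ‖S z‖ ≤ K * ‖z‖) (hST : ∀ z, S (T z) = z)
    {τ C : ℝ} (hτ : K * (2 * m) ^ (1 - 1 / p) < τ)
    (hC : ∀ D : ℝ, 0 ≤ D → D ^ (1 - 1 / p) ≤ K * (2 * m) ^ (1 - 1 / p) / τ → D ≤ C * m)
    (hA : ∀ A : ℝ, 0 ≤ A → (A ^ (1 - 1 / p) ≤ K * (2 * m) ^ (1 - 1 / p) * τ ^ ((p - 2) / p) ∨
      A ≤ (K * (2 * m) ^ (1 - 1 / p)) ^ 2) → A ≤ 1 / (32 * K ^ 2) * m)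
    (N : ℕ) {t : ℝ} (ht : 0 < t) :
    ∀ᶠ j in Filter.atTop, nrm2 (T (ff (F j))) ^ 2 ≤ 2 * m * K ^ 2 ∧
      ‖(ofFin (Finset.range N) (seq (T (ff (F j)))) : Xpw p w)‖ < t ∧
      ∃ E : Finset ℕ, (∀ n ∈ E, N ≤ n) ∧ muF p w E ≤ C * m ∧
        m / 4 ≤ psi S (F j) (ofFin E (seq (T (ff (F j))))) := by
  classical
  set Λ := K * (2 * m) ^ (1 - 1 / p) with hΛ
  have hΛ0 : 0 < Λ := by positivity
  have hτ0 : 0 < τ := hΛ0.trans hτ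
  have hpt := proj_tendsto hp (fun j => T (ff (F j)))
    (fun n => weak_null hp hw hm F hF hd ((seqC hp n).comp T)) N
  have hpt' := (Metric.tendsto_nhds.1 hpt) (min t (m / 4 / Λ)) (by positivity)
  filter_upwards [two_bound hp hw hm F hF hd T hK hT, hpt'] with j h2 h3
  rw [dist_zero_right] at h3
  refine ⟨h2, h3.trans_le (min_le_left _ _), ?_⟩
  set x := T (ff (F j)) with hx
  have hψ := psi_le hp hw hm (F j) (hF j).2 S hK hS
  rw [← hΛ] at hψ
  set ψ := psi S (F j) with hψd
  have hψx : m ≤ ψ x := by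
    rw [hψd, psi_apply, hx, hST, inner_ff_self hp hw]; exact (hF j).1
  -- truncation
  obtain ⟨L, hL, hNL⟩ : ∃ L, ‖(ofFin (Finset.range L) (seq x) : Xpw p w) - x‖ < m / 4 / Λ ∧ N ≤ L := by
    have := (Metric.tendsto_nhds.1 (ofFin_tendsto hp x)) (m / 4 / Λ) (by positivity)
    obtain ⟨L, hL, hL'⟩ := (this.and (Filter.eventually_ge_atTop N)).exists
    rw [dist_eq_norm] at hL
    exact ⟨L, hL, hL'⟩
  set E := (Finset.Ico N L).filter (fun n => τ ≤ |dens ψ n|) with hE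
  set G := (Finset.Ico N L).filter (fun n => ¬ τ ≤ |dens ψ n|) with hG
  have hsplit : (ofFin (Finset.range L) (seq x) : Xpw p w) =
      ofFin (Finset.range N) (seq x) + (ofFin E (seq x) + ofFin G (seq x)) := by
    simp only [ofFin, hE, hG]
    rw [Finset.sum_filter_add_sum_filter_not, Finset.sum_range_add_sum_Ico _ hNL]
  have hEs := split_large hp hw ψ hψ hΛ0.le hτ E (fun n hn => (Finset.mem_filter.1 hn).2)
  have hGs := split_small hp hw ψ hψ hΛ0.le hτ0 G
    (fun n hn => (not_le.1 (Finset.mem_filter.1 hn).2).le)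
  have hA0 : 0 ≤ ∑ n ∈ G, dens ψ n ^ 2 * mu p w n :=
    Finset.sum_nonneg fun n _ => mul_nonneg (sq_nonneg _) (mu_pos hw n).le
  have hGA := hA _ hA0 hGs
  have hGψ : |ψ (ofFin G (seq x))| ≤ m / 4 := by
    refine (psi_proj hp hw ψ x G).trans ?_
    refine (sq_le_sq₀ (mul_nonneg (nrm2_nonneg _) (Real.sqrt_nonneg _)) (by positivity)).1 ?_
    rw [mul_pow, Real.sq_sqrt hA0]
    calc _ ≤ (2 * m * K ^ 2) * (1 / (32 * K ^ 2) * m) :=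
          mul_le_mul h2 hGA hA0 (by positivity)
      _ = (m / 4) ^ 2 := by
          field_simp
          ring
  have hNψ : |ψ (ofFin (Finset.range N) (seq x))| < m / 4 := by
    calc _ ≤ Λ * ‖(ofFin (Finset.range N) (seq x) : Xpw p w)‖ := hψ _
      _ < Λ * (m / 4 / Λ) := mul_lt_mul_of_pos_left (h3.trans_le (min_le_right _ _)) hΛ0
      _ = m / 4 := by field_simp
  have hLψ : |ψ ((ofFin (Finset.range L) (seq x) : Xpw p w) - x)| < m / 4 := by
    calc _ ≤ Λ * ‖(ofFin (Finset.range L) (seq x) : Xpw p w) - x‖ := hψ _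
      _ < Λ * (m / 4 / Λ) := mul_lt_mul_of_pos_left hL hΛ0
      _ = m / 4 := by field_simp
  refine ⟨E, fun n hn => (Finset.mem_Ico.1 (Finset.mem_filter.1 hn).1).1,
    hC _ (muF_nonneg hw E) hEs, ?_⟩
  rw [map_sub, hsplit, map_add, map_add] at hLψ
  have a1 := abs_lt.1 hLψ
  have a2 := abs_lt.1 hNψ
  have a3 := abs_le.1 hGψ
  linarith [a1.1, a1.2, a2.1, a2.2, a3.1, a3.2]

theorem norm_ff_le (hp : 2 < p) (hw : ∀ n, 0 < w n) {m : ℝ} (hm : 0 < m) (hm1 : 2 * m ≤ 1)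
    (F : Finset ℕ) (hF : m ≤ muF p w F ∧ muF p w F ≤ 2 * m) :
    ‖(ff F : Xpw p w)‖ ≤ 2 * m ^ (1 / p) ∧ m ^ (1 / p) ≤ ‖(ff F : Xpw p w)‖ := by
  have hp0 : 0 < p := by linarith
  have hpos : 0 < muF p w F := hm.trans_le hF.1
  have e1 := nrmP_of_pow hp _ (nrmP_ff (w := w) hp hw F)
  have e2 := nrm2_of_pow _ (nrm2_ff (w := w) hp hw F)
  have i : Real.sqrt (muF p w F) ≤ muF p w F ^ (1 / p) := by
    rw [Real.sqrt_eq_rpow]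
    exact Real.rpow_le_rpow_of_exponent_ge hpos (hF.2.trans hm1)
      (one_div_le_one_div_of_le (by norm_num) hp.le)
  rw [norm_eq_max, e1, e2, max_eq_left i]
  constructor
  · calc _ ≤ (2 * m) ^ (1 / p) := Real.rpow_le_rpow hpos.le hF.2 (by positivity)
      _ = 2 ^ (1 / p) * m ^ (1 / p) := Real.mul_rpow (by norm_num) hm.le
      _ ≤ 2 * m ^ (1 / p) := by
        refine mul_le_mul_of_nonneg_right ?_ (by positivity)
        calc (2:ℝ) ^ (1 / p) ≤ 2 ^ (1:ℝ) := Real.rpow_le_rpow_of_exponent_le (by norm_num)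
              (by rw [div_le_one hp0]; linarith)
          _ = 2 := Real.rpow_one 2
  · exact Real.rpow_le_rpow hm.le hF.1 (by positivity)

theorem disjoint_contra (hp : 2 < p) (hw : ∀ n, 0 < w n) {m : ℝ} (hm : 0 < m)
    (F : ℕ → Finset ℕ)
    (hF : ∀ j, m ≤ muF p w (F j) ∧ muF p w (F j) ≤ 2 * m)
    (hd : ∀ i j, i ≠ j → Disjoint (F i) (F j)) (S : Xpw p w →L[ℝ] Xpw p w) {K : ℝ} (hK : 1 ≤ K)
    (hS : ∀ z, ‖S z‖ ≤ K * ‖z‖) (E : ℕ → Finset ℕ) (hE : ∀ i j, i ≠ j → Disjoint (E i) (E j))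
    (y : ℕ → Xpw p w) (hy : ∀ j n, n ∉ E j → seq (y j) n = 0) {R : ℝ} (hR : 0 < R)
    (hyP : ∀ j, nrmP (y j) ≤ R) (hy2 : ∀ j, nrm2 (y j) ≤ 1 / (8 * K) * Real.sqrt m)
    (hψ : ∀ j, m / 4 ≤ psi S (F j) (y j)) : False := by
  have hp0 : 0 < p := by linarith
  have hK0 : 0 < K := by linarith
  have hsm : 0 < Real.sqrt m := Real.sqrt_pos.2 hm
  have hr : 0 < 1 / 2 - 1 / p := by
    have := one_div_lt_one_div_of_lt (by norm_num : (0:ℝ) < 2) hp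
    linarith
  obtain ⟨M, hM, hM0⟩ : ∃ M : ℕ, R / (1 / (8 * K) * Real.sqrt m) ≤ (M : ℝ) ^ (1 / 2 - 1 / p) ∧
      0 < M := by
    have := (tendsto_rpow_atTop hr).comp tendsto_natCast_atTop_atTop
    exact ((this.eventually_ge_atTop _).and (Filter.eventually_gt_atTop 0)).exists
  have hMr : (0:ℝ) < M := by exact_mod_cast hM0
  obtain ⟨σ, hσ, h⟩ := sign_choice
    (fun i j => inner ℝ (toL2 (ff (F i) : Xpw p w)) (toL2 (S (y j)))) (Finset.range M)
  have hσ1 : ∀ i, |σ i| = 1 := fun i => by rcases hσ i with h | h <;> simp [h]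
  have h1 := (sum_ff_bound hp hw hm F hF hd σ hσ (Finset.range M)).1
  have h2 : ∑ i ∈ Finset.range M, ∑ j ∈ Finset.range M,
      σ i * σ j * inner ℝ (toL2 (ff (F i) : Xpw p w)) (toL2 (S (y j)))
      = inner ℝ (toL2 (∑ j ∈ Finset.range M, σ j • (ff (F j) : Xpw p w)))
          (toL2 (S (∑ j ∈ Finset.range M, σ j • y j))) := by
    simp only [map_sum, map_smul, sum_inner, inner_sum, real_inner_smul_left,
        real_inner_smul_right]
    rw [Finset.sum_comm]
    refine Finset.sum_congr rfl fun i _ => Finset.sum_congr rfl fun j _ => ?_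
    ring
  rw [h2] at h
  have h3 := h.trans (real_inner_le_norm _ _)
  rw [← nrm2_eq, ← nrm2_eq] at h3
  obtain ⟨g1, g2⟩ := sum_disj hp E (fun j => σ j • y j) hE (by
    intro j n hn
    rw [seq_smul, hy j n hn, mul_zero]) (Finset.range M)
  simp only [nrmP_smul, nrm2_smul, hσ1, one_mul] at g1 g2
  set Z := ∑ j ∈ Finset.range M, σ j • y j with hZ
  set κ := 1 / (8 * K) * Real.sqrt m with hκ
  have hκ0 : 0 < κ := by positivity
  have b2 : nrm2 Z ≤ κ * Real.sqrt M := by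
    refine (sq_le_sq₀ (nrm2_nonneg _) (by positivity)).1 ?_
    rw [g2, mul_pow, Real.sq_sqrt hMr.le]
    calc _ ≤ ∑ j ∈ Finset.range M, κ ^ 2 :=
          Finset.sum_le_sum fun j _ => pow_le_pow_left₀ (nrm2_nonneg _) (hy2 j) 2
      _ = _ := by rw [Finset.sum_const, Finset.card_range, nsmul_eq_mul]; ring
  have bP : nrmP Z ≤ κ * Real.sqrt M := by
    have b1 : nrmP Z ≤ R * (M : ℝ) ^ (1 / p) := by
      refine (Real.rpow_le_rpow_iff (nrmP_nonneg _) (by positivity) hp0).1 ?_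
      rw [g1, Real.mul_rpow hR.le (by positivity), ← Real.rpow_mul hMr.le,
        div_mul_cancel₀ _ hp0.ne', Real.rpow_one]
      calc _ ≤ ∑ j ∈ Finset.range M, R ^ p :=
            Finset.sum_le_sum fun j _ => Real.rpow_le_rpow (nrmP_nonneg _) (hyP j) hp0.le
        _ = _ := by rw [Finset.sum_const, Finset.card_range, nsmul_eq_mul]; ring
    refine b1.trans ?_
    rw [Real.rpow_sub hMr, div_le_div_iff₀ hκ0 (by positivity)] at hM
    rw [Real.sqrt_eq_rpow]
    linarith
  have bN : nrm2 (S Z) ≤ K * (κ * Real.sqrt M) :=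
    (nrm2_le _).trans ((hS Z).trans (mul_le_mul_of_nonneg_left (max_le bP b2) hK0.le))
  have lo : (M : ℝ) * (m / 4) ≤ ∑ i ∈ Finset.range M,
      inner ℝ (toL2 (ff (F i) : Xpw p w)) (toL2 (S (y i))) := by
    calc (M : ℝ) * (m / 4) = ∑ i ∈ Finset.range M, m / 4 := by
          rw [Finset.sum_const, Finset.card_range, nsmul_eq_mul]
      _ ≤ _ := Finset.sum_le_sum fun j _ => hψ j
  rw [Finset.card_range] at h1
  have h4 : (M : ℝ) * (m / 4) ≤ Real.sqrt (2 * m * M) * (K * (κ * Real.sqrt M)) :=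
    lo.trans (h3.trans (mul_le_mul h1 bN (nrm2_nonneg _) (Real.sqrt_nonneg _)))
  have h5 : K * (κ * Real.sqrt M) = 1 / 8 * Real.sqrt (m * M) := by
    rw [hκ, Real.sqrt_mul hm.le]
    field_simp
  have h6 : Real.sqrt (2 * m * M) = Real.sqrt 2 * Real.sqrt (m * M) := by
    rw [mul_assoc, Real.sqrt_mul (by norm_num)]
  rw [h5, h6] at h4
  have h7 : Real.sqrt (m * M) * Real.sqrt (m * M) = m * M := Real.mul_self_sqrt (by positivity)
  have h8 : Real.sqrt 2 ≤ 3 / 2 := by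
    rw [Real.sqrt_le_left (by norm_num)]; norm_num
  have h9 : Real.sqrt 2 * Real.sqrt (m * M) * (1 / 8 * Real.sqrt (m * M))
      = Real.sqrt 2 / 8 * (m * M) := by
    linear_combination (Real.sqrt 2 / 8) * h7
  rw [h9] at h4
  have : 0 < m * M := by positivity
  nlinarith

theorem exists_good (hp : 2 < p) (hw : ∀ n, 0 < w n) {m : ℝ} (hm : 0 < m) (hm1 : 2 * m ≤ 1)
    (F : ℕ → Finset ℕ)
    (hF : ∀ j, m ≤ muF p w (F j) ∧ muF p w (F j) ≤ 2 * m)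
    (hd : ∀ i j, i ≠ j → Disjoint (F i) (F j)) (T S : Xpw p w →L[ℝ] Xpw p w) {K : ℝ} (hK : 1 ≤ K)
    (hT : ∀ z, ‖T z‖ ≤ K * ‖z‖) (hS : ∀ z, ‖S z‖ ≤ K * ‖z‖) (hST : ∀ z, S (T z) = z)
    {τ C : ℝ} (hτ : K * (2 * m) ^ (1 - 1 / p) < τ)
    (hC : ∀ D : ℝ, 0 ≤ D → D ^ (1 - 1 / p) ≤ K * (2 * m) ^ (1 - 1 / p) / τ → D ≤ C * m)
    (hA : ∀ A : ℝ, 0 ≤ A → (A ^ (1 - 1 / p) ≤ K * (2 * m) ^ (1 - 1 / p) * τ ^ ((p - 2) / p) ∨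
      A ≤ (K * (2 * m) ^ (1 - 1 / p)) ^ 2) → A ≤ 1 / (32 * K ^ 2) * m)
    (N : ℕ) {t : ℝ} (ht : 0 < t) :
    ∃ j, nrm2 (T (ff (F j))) ^ 2 ≤ 2 * m * K ^ 2 ∧
      ‖(ofFin (Finset.range N) (seq (T (ff (F j)))) : Xpw p w)‖ < t ∧
      ∃ E : Finset ℕ, (∀ n ∈ E, N ≤ n) ∧ muF p w E ≤ C * m ∧
        1 / (8 * K) * Real.sqrt m ≤ nrm2 (ofFin E (seq (T (ff (F j)))) : Xpw p w) := by
  classical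
  by_contra hcon
  push Not at hcon
  have sel := fun N' => select hp hw hm F hF hd T S hK hT hS hST hτ hC hA N' ht
  obtain ⟨f, hf, hfd⟩ := exists_seq_of_forall_finset_exists (α := ℕ × Finset ℕ)
    (fun a => m / 4 ≤ psi S (F a.1) (ofFin a.2 (seq (T (ff (F a.1))))) ∧
      nrm2 (ofFin a.2 (seq (T (ff (F a.1)))) : Xpw p w) ≤ 1 / (8 * K) * Real.sqrt m)
    (fun a b => a.1 < b.1 ∧ Disjoint a.2 b.2) (by
      intro s _
      set N' := N + (s.biUnion Prod.snd).sup id + 1 with hN'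
      obtain ⟨j, ⟨⟨h1, h2, _⟩, ⟨_, _, E, hE, hE1, hE2⟩⟩, hj⟩ :=
        (((sel N).and (sel N')).and
          (Filter.eventually_gt_atTop ((s.image Prod.fst).sup id))).exists
      refine ⟨(j, E), ⟨hE2, (hcon j h1 h2 E (fun n hn => ?_) hE1).le⟩, fun a ha => ⟨?_, ?_⟩⟩
      · have := hE n hn; omega
      · refine lt_of_le_of_lt ?_ hj
        exact Finset.le_sup (f := id) (Finset.mem_image_of_mem _ ha)
      · rw [Finset.disjoint_left]
        intro n hn hn'
        have h3 := hE n hn'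
        have h4 : n ≤ (s.biUnion Prod.snd).sup id :=
          Finset.le_sup (f := id) (Finset.mem_biUnion.2 ⟨a, ha, hn⟩)
        omega)
  have hinj : ∀ i j, i ≠ j → (f i).1 ≠ (f j).1 ∧ Disjoint (f i).2 (f j).2 := by
    intro i j hij
    rcases lt_or_gt_of_ne hij with h | h
    · exact ⟨(hfd i j h).1.ne, (hfd i j h).2⟩
    · exact ⟨(hfd j i h).1.ne', (hfd j i h).2.symm⟩
  refine disjoint_contra hp hw hm (fun k => F (f k).1) (fun k => hF _)
    (fun i j hij => hd _ _ (hinj i j hij).1) S hK hS (fun k => (f k).2)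
    (fun i j hij => (hinj i j hij).2) (fun k => ofFin (f k).2 (seq (T (ff (F (f k).1)))))
    (fun k n hn => by rw [seq_ofFin, if_neg hn]) (R := K * (2 * m ^ (1 / p))) (by positivity)
    (fun k => ?_) (fun k => (hf k).2) (fun k => (hf k).1)
  refine (nrmP_proj_le hp _ _).trans ((nrmP_le _).trans ((hT _).trans ?_))
  exact mul_le_mul_of_nonneg_left (norm_ff_le hp hw hm hm1 _ (hF _)).1 (by linarith)

end Main

theorem num_choice (hp : 2 < p) {K θ : ℝ} (hK : 1 ≤ K) (hθ : 0 < θ) :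
    ∃ τ C : ℝ, 0 < C ∧ ∀ᶠ m in nhdsWithin (0:ℝ) (Set.Ioi 0),
      K * (2 * m) ^ (1 - 1 / p) < τ ∧
      (∀ D : ℝ, 0 ≤ D → D ^ (1 - 1 / p) ≤ K * (2 * m) ^ (1 - 1 / p) / τ → D ≤ C * m) ∧
      (∀ A : ℝ, 0 ≤ A → (A ^ (1 - 1 / p) ≤ K * (2 * m) ^ (1 - 1 / p) * τ ^ ((p - 2) / p) ∨
        A ≤ (K * (2 * m) ^ (1 - 1 / p)) ^ 2) → A ≤ θ * m) := by
  have hp0 : 0 < p := by linarith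
  have hp2 : 0 < p - 2 := by linarith
  have hK0 : 0 < K := by linarith
  set q := 1 - 1 / p with hq
  have hq0 : 0 < q := by
    have : 1 / p < 1 := by rw [div_lt_one hp0]; linarith
    linarith
  have ht : ∀ a : ℝ, 0 < a → Filter.Tendsto (fun m : ℝ => (2 * m) ^ a)
      (nhdsWithin (0:ℝ) (Set.Ioi 0)) (nhds 0) := by
    intro a ha
    have h1 : Filter.Tendsto (fun m : ℝ => 2 * m) (nhds 0) (nhds (2 * 0)) :=
      (continuous_const.mul continuous_id).tendsto 0
    have h2 := h1.rpow_const (p := a) (Or.inr ha.le)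
    rw [mul_zero, Real.zero_rpow ha.ne'] at h2
    exact h2.mono_left nhdsWithin_le_nhds
  set τ := ((θ / 2) ^ q / K) ^ (p / (p - 2)) with hτ
  have hτ0 : 0 < τ := by positivity
  have hτ1 : K * τ ^ ((p - 2) / p) = (θ / 2) ^ q := by
    rw [hτ, ← Real.rpow_mul (by positivity)]
    have : p / (p - 2) * ((p - 2) / p) = 1 := by field_simp
    rw [this, Real.rpow_one]
    field_simp
  set C := 2 * (K / τ) ^ (1 / q) with hC
  have hC0 : 0 < C := by positivity
  have hC1 : (C / 2) ^ q = K / τ := by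
    have : C / 2 = (K / τ) ^ (1 / q) := by rw [hC]; ring
    rw [this, ← Real.rpow_mul (by positivity), one_div_mul_cancel hq0.ne', Real.rpow_one]
  refine ⟨τ, C, hC0, ?_⟩
  have ev1 : ∀ᶠ m in nhdsWithin (0:ℝ) (Set.Ioi 0), K * (2 * m) ^ q < τ := by
    have := (ht q hq0).const_mul K
    rw [mul_zero] at this
    exact this.eventually_lt_const hτ0
  have ev2 : ∀ᶠ m in nhdsWithin (0:ℝ) (Set.Ioi 0), 2 * K ^ 2 * (2 * m) ^ ((p - 2) / p) < θ := by
    have := (ht ((p - 2) / p) (by positivity)).const_mul (2 * K ^ 2)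
    rw [mul_zero] at this
    exact this.eventually_lt_const hθ
  filter_upwards [ev1, ev2, self_mem_nhdsWithin] with m h1 h2 hm
  have hm0 : 0 < m := hm
  refine ⟨h1, fun D hD h => ?_, fun A hA h => ?_⟩
  · refine (Real.rpow_le_rpow_iff hD (by positivity) hq0).1 (h.trans (le_of_eq ?_))
    have : C * m = C / 2 * (2 * m) := by ring
    rw [this, Real.mul_rpow (x := C / 2) (y := 2 * m) (by positivity) (by positivity), hC1]
    ring
  · rcases h with h | h
    · refine (Real.rpow_le_rpow_iff hA (by positivity) hq0).1 (h.trans (le_of_eq ?_))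
      have : θ * m = θ / 2 * (2 * m) := by ring
      rw [this, Real.mul_rpow (x := θ / 2) (y := 2 * m) (by positivity) (by positivity), ← hτ1]
      ring
    · refine h.trans ?_
      have : ((2 * m) ^ q) ^ 2 = (2 * m) * (2 * m) ^ ((p - 2) / p) := by
        have e : (2 * m) * (2 * m) ^ ((p - 2) / p) = (2 * m) ^ (1 + (p - 2) / p) := by
          rw [Real.rpow_add (by positivity), Real.rpow_one]
        rw [e, ← Real.rpow_two, ← Real.rpow_mul (by positivity)]
        congr 1
        rw [hq]
        field_simp
        ring
      rw [mul_pow, this]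
      nlinarith

theorem omegaE_coe (p : ℝ) (w : ℕ → ℝ) (E : Finset ℕ) : omegaE p w (E : Set ℕ) = muF p w E :=
  Finset.tsum_subtype' E (fun n => mu p w n)

theorem main_aux [Fact (1 ≤ ENNReal.ofReal p)] (hp : 2 < p) (hw : IsXpWeight p w)
    (T S : Xpw p w →L[ℝ] Xpw p w) (hST : ∀ z, S (T z) = z) :
    ∃ c δ : ℝ, 0 < c ∧ 0 < δ ∧
      ∀ ε : ℝ, 0 < ε → ∃ ε' : ℝ, 0 < ε' ∧ ε' < ε ∧
        ∀ N : ℕ, 1 ≤ N → ∃ x : Xpw p w, (∃ (s : ℝ) (z : Xpw p w), x = s • T z) ∧ ‖x‖ = 1 ∧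
          ∃ E : Set ℕ, E.Finite ∧ E ⊆ {n : ℕ | N ≤ n} ∧
            ‖restrict {n : ℕ | n < N} x‖ < (N : ℝ)⁻¹ ∧
            nrm2 (restrict E x) ≥ δ * nrm2 x ∧
            ε ≥ c * nrm2 (restrict E x) ∧
            c * nrm2 (restrict E x) ≥ omegaE p w E ^ ((p - 2) / (2 * p)) ∧
            omegaE p w E ^ ((p - 2) / (2 * p)) ≥ ε' := by
  have hp0 : 0 < p := by linarith
  have hp2 : 0 < p - 2 := by linarith
  have hw0 := hw.1
  set K := max 1 (max ‖T‖ ‖S‖) with hKdef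
  have hK : 1 ≤ K := le_max_left _ _
  have hK0 : 0 < K := by linarith
  have hT : ∀ z, ‖T z‖ ≤ K * ‖z‖ := fun z => (T.le_opNorm z).trans
    (mul_le_mul_of_nonneg_right ((le_max_left _ _).trans (le_max_right _ _)) (norm_nonneg z))
  have hS : ∀ z, ‖S z‖ ≤ K * ‖z‖ := fun z => (S.le_opNorm z).trans
    (mul_le_mul_of_nonneg_right ((le_max_right _ _).trans (le_max_right _ _)) (norm_nonneg z))
  obtain ⟨τ, C, hC0, hev⟩ := num_choice (p := p) hp hK (θ := 1 / (32 * K ^ 2)) (by positivity)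
  set r := (p - 2) / (2 * p) with hr
  have hr0 : 0 < r := by positivity
  set κ := 1 / (8 * K) with hκ
  have hκ0 : 0 < κ := by positivity
  set c := 2 * K * C ^ r / κ with hc
  have hc0 : 0 < c := by positivity
  refine ⟨c, κ / (2 * K), hc0, by positivity, fun ε hε => ?_⟩
  have ev1 : ∀ᶠ m in nhdsWithin (0:ℝ) (Set.Ioi 0), 2 * c * K ^ 2 * m ^ r < ε := by
    have h1 : Filter.Tendsto (fun m : ℝ => m) (nhdsWithin 0 (Set.Ioi 0)) (nhds 0) :=
      Filter.tendsto_id.mono_left nhdsWithin_le_nhds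
    have h2 := (h1.rpow_const (p := r) (Or.inr hr0.le)).const_mul (2 * c * K ^ 2)
    rw [Real.zero_rpow hr0.ne', mul_zero] at h2
    exact h2.eventually_lt_const hε
  have ev2 : ∀ᶠ m in nhdsWithin (0:ℝ) (Set.Ioi 0), m < 1 / 2 :=
    nhdsWithin_le_nhds (Iio_mem_nhds (by norm_num))
  obtain ⟨m, ⟨⟨⟨hτ, hC, hA⟩, hmε⟩, hm2⟩, hm⟩ :=
    (((hev.and ev1).and ev2).and self_mem_nhdsWithin).exists
  have hm0 : 0 < m := hm
  have hm1 : 2 * m ≤ 1 := by linarith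
  obtain ⟨F, hF, hd⟩ := exists_blocks hp hw hm0
  refine ⟨min (κ / (2 * K) * m ^ r) (ε / 2), by positivity,
    (min_le_right _ _).trans_lt (by linarith), fun N hN => ?_⟩
  have hN0 : (0:ℝ) < N := by exact_mod_cast hN
  set a := m ^ (1 / p) with ha
  have ha0 : 0 < a := by positivity
  set h := Real.sqrt m with hh
  have hh0 : 0 < h := Real.sqrt_pos.2 hm0
  have hha : h = m ^ r * a := by
    rw [hh, ha, Real.sqrt_eq_rpow, ← Real.rpow_add hm0]
    congr 1
    rw [hr]; field_simp; ring
  obtain ⟨j, g1, g2, E, hE, hE1, hE2⟩ := exists_good hp hw0 hm0 hm1 F hF hd T S hK hT hS hST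
    hτ hC hA N (t := (N : ℝ)⁻¹ * (a / K)) (by positivity)
  have hff := norm_ff_le (w := w) hp hw0 hm0 hm1 (F j) (hF j)
  set x := T (ff (F j)) with hx
  have n1 : ‖x‖ ≤ 2 * K * a := by
    have := (hT (ff (F j))).trans (mul_le_mul_of_nonneg_left hff.1 hK0.le)
    linarith
  have n2 : a / K ≤ ‖x‖ := by
    rw [div_le_iff₀ hK0]
    have h1 := hS x
    rw [hx, hST, ← hx] at h1
    linarith [hff.2]
  have nx : 0 < ‖x‖ := lt_of_lt_of_le (by positivity) n2
  have n3 : nrm2 x ≤ 2 * K * h := by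
    refine (sq_le_sq₀ (nrm2_nonneg _) (by positivity)).1 ?_
    have : h ^ 2 = m := Real.sq_sqrt hm0.le
    rw [mul_pow, this]
    have : 0 ≤ m * K ^ 2 := by positivity
    nlinarith
  have n4 := nrm2_proj_le x E
  have hol := holder_E hp hw0 E x
  set e := nrm2 (ofFin E (seq x) : Xpw p w) with he
  have hmr : 0 < m ^ r := by positivity
  have l1 : κ / (2 * K) * m ^ r ≤ e / ‖x‖ := by
    rw [le_div_iff₀ nx]
    calc κ / (2 * K) * m ^ r * ‖x‖ ≤ κ / (2 * K) * m ^ r * (2 * K * a) := by gcongr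
      _ = κ * h := by rw [hha]; field_simp
      _ ≤ e := hE2
  have hrs : ∀ G : Finset ℕ, restrict (G : Set ℕ) (‖x‖⁻¹ • x) = ‖x‖⁻¹ • ofFin G (seq x) := by
    intro G
    rw [restrict_eq, ofFin_smul]
  have hrE : nrm2 (restrict (E : Set ℕ) (‖x‖⁻¹ • x)) = e / ‖x‖ := by
    rw [hrs, nrm2_smul, abs_of_pos (by positivity)]
    rw [← he]; field_simp
  refine ⟨‖x‖⁻¹ • x, ⟨_, _, rfl⟩, ?_, (E : Set ℕ), E.finite_toSet, fun n hn => hE n hn,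
    ?_, ?_, ?_, ?_, ?_⟩
  · rw [norm_smul, norm_inv, norm_norm, inv_mul_cancel₀ nx.ne']
  · have : {n : ℕ | n < N} = ((Finset.range N : Finset ℕ) : Set ℕ) := by ext n; simp
    rw [this, hrs, norm_smul, norm_inv, norm_norm, inv_mul_lt_iff₀ nx]
    calc _ < (N : ℝ)⁻¹ * (a / K) := g2
      _ ≤ (N : ℝ)⁻¹ * ‖x‖ := by gcongr
      _ = _ := by ring
  · rw [hrE, nrm2_smul, abs_of_pos (by positivity), ge_iff_le, le_div_iff₀ nx]
    calc κ / (2 * K) * (‖x‖⁻¹ * nrm2 x) * ‖x‖ = κ / (2 * K) * nrm2 x := by field_simp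
      _ ≤ κ / (2 * K) * (2 * K * h) := by gcongr
      _ = κ * h := by field_simp
      _ ≤ e := hE2
  · rw [hrE, ge_iff_le]
    refine le_trans ?_ hmε.le
    have : e / ‖x‖ ≤ 2 * K ^ 2 * m ^ r := by
      rw [div_le_iff₀ nx]
      calc e ≤ 2 * K * h := n4.trans n3
        _ = 2 * K ^ 2 * m ^ r * (a / K) := by rw [hha]; field_simp
        _ ≤ _ := by gcongr
    calc c * (e / ‖x‖) ≤ c * (2 * K ^ 2 * m ^ r) := by gcongr
      _ = _ := by ring
  · rw [hrE, omegaE_coe, ge_iff_le]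
    calc muF p w E ^ r ≤ (C * m) ^ r := Real.rpow_le_rpow (muF_nonneg hw0 E) hE1 hr0.le
      _ = C ^ r * m ^ r := Real.mul_rpow hC0.le hm0.le
      _ = c * (κ / (2 * K) * m ^ r) := by rw [hc]; field_simp
      _ ≤ _ := by gcongr
  · rw [omegaE_coe, ge_iff_le]
    refine (min_le_left _ _).trans (l1.trans ?_)
    rw [div_le_iff₀ nx]
    linarith

/-- Theorem 1.3, 1 ⟹ 2: if `X` is a complemented subspace of `X_p` which
contains a subspace `Y` isomorphic to `X_p` and complemented in `X`, then there are
constants `c, δ > 0` such that for every `ε > 0` there is `0 < ε' < ε` such that for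
every `N` there are a norm-one `x ∈ X` and a finite set `E ⊆ {N, N+1, …}` with
(a) `‖x_{|[1,N]}‖ < N⁻¹`, (b) `|x_{|E}|_2 ≥ δ |x|_2`,
(c) `ε ≥ c |x_{|E}|_2 ≥ ω(E)^{(p-2)/(2p)} ≥ ε'`. -/
theorem stmt7 (p : ℝ) (hp : 2 < p) [Fact (1 ≤ ENNReal.ofReal p)]
    (w : ℕ → ℝ) (hw : IsXpWeight p w)
    (X : Submodule ℝ (Xpw p w)) (hX : X.ClosedComplemented)
    (Y : Submodule ℝ ↥X)
    (hYcompl : Submodule.ClosedComplemented (R := ℝ) (M := ↥X) Y)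
    (hYiso : Nonempty (↥Y ≃L[ℝ] Xpw p w)) :
    ∃ c δ : ℝ, 0 < c ∧ 0 < δ ∧
      ∀ ε : ℝ, 0 < ε → ∃ ε' : ℝ, 0 < ε' ∧ ε' < ε ∧
        ∀ N : ℕ, 1 ≤ N → ∃ x : Xpw p w, x ∈ X ∧ ‖x‖ = 1 ∧
          ∃ E : Set ℕ, E.Finite ∧ E ⊆ {n : ℕ | N ≤ n} ∧
            ‖restrict {n : ℕ | n < N} x‖ < (N : ℝ)⁻¹ ∧
            nrm2 (restrict E x) ≥ δ * nrm2 x ∧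
            ε ≥ c * nrm2 (restrict E x) ∧
            c * nrm2 (restrict E x) ≥ omegaE p w E ^ ((p - 2) / (2 * p)) ∧
            omegaE p w E ^ ((p - 2) / (2 * p)) ≥ ε' := by
  obtain ⟨P, hP⟩ := hX
  obtain ⟨Q, hQ⟩ := hYcompl
  obtain ⟨e⟩ := hYiso
  let T : Xpw p w →L[ℝ] Xpw p w :=
    X.subtypeL.comp (Y.subtypeL.comp (e.symm : Xpw p w →L[ℝ] ↥Y))
  let S : Xpw p w →L[ℝ] Xpw p w := (e : ↥Y →L[ℝ] Xpw p w).comp (Q.comp P)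
  have hST : ∀ z, S (T z) = z := by
    intro z
    have h1 : P (((e.symm z : ↥Y) : ↥X) : Xpw p w) = ((e.symm z : ↥Y) : ↥X) := hP _
    have h2 : Q ((e.symm z : ↥Y) : ↥X) = e.symm z := hQ _
    change e (Q (P (((e.symm z : ↥Y) : ↥X) : Xpw p w))) = z
    rw [h1, h2, e.apply_symm_apply]
  obtain ⟨c, δ, hc, hδ, H⟩ := main_aux hp hw T S hST
  refine ⟨c, δ, hc, hδ, fun ε hε => ?_⟩
  obtain ⟨ε', h1, h2, h3⟩ := H ε hε
  refine ⟨ε', h1, h2, fun N hN => ?_⟩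
  obtain ⟨x, ⟨s, z, rfl⟩, hx⟩ := h3 N hN
  exact ⟨s • T z, X.smul_mem s ((e.symm z : ↥Y) : ↥X).2, hx⟩
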